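/- For every N ≥ 1 and every X = (x₁ < ⋯ < x_N) ∈ 𝔾_N the dimension Dim X is finite and equals ∏_{1≤i<j≤N}(x_j − x_i) / ((q;q)₁ (q;q)₂ ⋯ (q;q)_{N−1}); for N = 1 the empty products are interpreted as 1. -/

import Mathlib

open scoped BigOperators ENNReal
open Classical

noncomputable section

/-- The double q-lattice Λ = {ζ₋ qᵐ} ∪ {ζ₊ qⁿ}. -/
def Lambda (q zm zp : ℝ) : Set ℝ :=
  {x | ∃ m : ℤ, x = zm * q ^ m} ∪ {x | ∃ n : ℤ, x = zp * q ^ n}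

/-- The interval I(a,b) of the double q-lattice. -/
def qInterval (q zm zp a b : ℝ) : Set ℝ :=
  if b < 0 then Set.Ico a b ∩ Lambda q zm zp
  else if a < 0 then Set.Icc a b ∩ Lambda q zm zp
  else Set.Ioc a b ∩ Lambda q zm zp

/-- N-point configurations on the lattice. -/
def Conf (q zm zp : ℝ) (N : ℕ) : Type :=
  {x : Fin N → ℝ // StrictMono x ∧ ∀ i, x i ∈ Lambda q zm zp}

/-- Interlacement Y ≺ X. -/
def Interlaces (q zm zp : ℝ) {N : ℕ} (Y : Conf q zm zp N) (X : Conf q zm zp (N+1)) : Prop :=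
  ∀ i : Fin N, Y.1 i ∈ qInterval q zm zp (X.1 i.castSucc) (X.1 i.succ)

/-- Vandermonde-type product ∏_{i<j} (x_j - x_i). -/
def vprod {N : ℕ} (x : Fin N → ℝ) : ℝ :=
  ∏ p ∈ Finset.univ.filter (fun p : Fin N × Fin N => p.1 < p.2), (x p.2 - x p.1)

/-- finite q-Pochhammer symbol (a;q)_n, real version. -/
def qpochR (a q : ℝ) (n : ℕ) : ℝ := ∏ m ∈ Finset.range n, (1 - a * q ^ m)

/-- The dimension Dim X, defined recursively: Dim X = 1 on 𝔾₁ and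
Dim X = Σ_{Y ≺ X} ∏|yᵢ| · Dim Y (a possibly infinite sum of nonnegative terms,
so with values in [0,∞]). -/
def DimG (q zm zp : ℝ) : (N : ℕ) → Conf q zm zp N → ℝ≥0∞
  | 0, _ => 1
  | 1, _ => 1
  | (N+2), X =>
      ∑' Y : {Y : Conf q zm zp (N+1) // Interlaces q zm zp Y X},
        (∏ i, ENNReal.ofReal |Y.1.1 i|) * DimG q zm zp (N+1) Y.1

/-!
By induction on `N`, the formula reduces to summing `∏ |yᵢ| · ∏_{i<j} (yⱼ - yᵢ)` over all `Y ≺ X`.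
The configurations interlacing with `X` form the product of the intervals `I(xᵢ, xᵢ₊₁)`, and the
summand is the determinant of the matrix `|yᵢ| yᵢ ^ j`, so the sum can be taken row by row. Since
`|y|` on `I(a, b)` is `y` times the difference of the indicators of `{b qⁿ}` and `{a qⁿ}`, each
entry sums to a difference of two geometric series, namely to
`(xᵢ₊₁ ^ (j + 1) - xᵢ ^ (j + 1)) / (1 - q ^ (j + 1))`. The denominators multiply to `(q;q)_{N-1}`,
and the numerators are what remains of the Vandermonde matrix of `X` after subtracting from each row
the preceding one.
-/

section HasSum

variable {R : Type*} [NormedCommRing R] [NormedSpace ℝ R] [FiniteDimensional ℝ R]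

theorem hasSum_pi_prod {n : ℕ} {β : Fin n → Type*} {f : ∀ i, β i → R} {c : Fin n → R}
    (h : ∀ i, HasSum (f i) (c i)) :
    HasSum (fun y : ∀ i, β i => ∏ i, f i (y i)) (∏ i, c i) := by
  have : CompleteSpace R := FiniteDimensional.complete ℝ R
  induction n with
  | zero => simpa only [Fin.prod_univ_zero] using hasSum_unique fun _ : ∀ i, β i => (1 : R)
  | succ n ih =>
    have htail := ih fun i => h i.succ
    have hsummable := summable_mul_of_summable_norm (h 0).summable.norm htail.summable.norm
    rw [← (Fin.consEquiv β).hasSum_iff, Fin.prod_univ_succ]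
    simpa only [Function.comp_def, Fin.consEquiv_apply, Fin.prod_univ_succ, Fin.cons_zero,
      Fin.cons_succ] using (h 0).mul htail hsummable

theorem hasSum_det {n : ℕ} {β : Fin n → Type*} {f : ∀ i, Fin n → β i → R}
    {A : Matrix (Fin n) (Fin n) R} (h : ∀ i j, HasSum (f i j) (A i j)) :
    HasSum (fun y : ∀ i, β i => (Matrix.of fun i j => f i j (y i)).det) A.det := by
  simp only [← Matrix.det_transpose (M := A), ← Matrix.det_transpose (M := Matrix.of _),
    Matrix.det_apply', Matrix.transpose_apply, Matrix.of_apply]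
  exact hasSum_sum fun σ _ => (hasSum_pi_prod fun i => h i (σ i)).mul_left _

end HasSum

section Vandermonde

theorem det_vandermonde_eq_det_sub_pred {R : Type*} [CommRing R] {n : ℕ} (x : Fin (n + 1) → R) :
    (Matrix.vandermonde x).det =
      (Matrix.of fun i j : Fin n =>
        x i.succ ^ ((j : ℕ) + 1) - x i.castSucc ^ ((j : ℕ) + 1)).det := by
  let B : Matrix (Fin (n + 1)) (Fin (n + 1)) R := Matrix.of fun i j =>
    Fin.cases (x 0 ^ (j : ℕ)) (fun i : Fin n => x i.succ ^ (j : ℕ) - x i.castSucc ^ (j : ℕ)) i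
  have row_reduction : (Matrix.vandermonde x).det = B.det :=
    Matrix.det_eq_of_forall_row_eq_smul_add_pred (fun _ => 1)
      (by simp [B, Matrix.vandermonde_apply]) (by simp [B, Matrix.vandermonde_apply])
  rw [row_reduction, Matrix.det_succ_column_zero, Fin.sum_univ_succ]
  simp only [B, Matrix.of_apply, Fin.cases_zero, Fin.cases_succ, Fin.val_zero, pow_zero, sub_self,
    mul_zero, zero_mul, Finset.sum_const_zero, add_zero, one_mul]
  rfl

theorem vprod_eq_det_vandermonde {N : ℕ} (x : Fin N → ℝ) :
    vprod x = (Matrix.vandermonde x).det := by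
  simp only [Matrix.det_vandermonde, vprod, Finset.prod_filter, Fintype.prod_prod_type,
    ← Finset.filter_lt_eq_Ioi]

theorem vprod_of_subsingleton {N : ℕ} [Subsingleton (Fin N)] (x : Fin N → ℝ) : vprod x = 1 :=
  Finset.prod_eq_one fun p hp =>
    absurd (Subsingleton.elim p.1 p.2) (Finset.mem_filter.1 hp).2.ne

theorem vprod_nonneg {N : ℕ} {x : Fin N → ℝ} (hx : Monotone x) : 0 ≤ vprod x :=
  Finset.prod_nonneg fun _ hp => sub_nonneg.2 (hx (Finset.mem_filter.1 hp).2.le)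

end Vandermonde

theorem qpochR_self_eq_prod_fin (q : ℝ) (n : ℕ) :
    qpochR q q n = ∏ j : Fin n, (1 - q ^ ((j : ℕ) + 1)) := by
  simp only [qpochR, Finset.prod_range, pow_succ']

theorem qpochR_self_pos {q : ℝ} (hq0 : 0 ≤ q) (hq1 : q < 1) (n : ℕ) : 0 < qpochR q q n := by
  rw [qpochR_self_eq_prod_fin]
  exact Finset.prod_pos fun j _ => sub_pos.2 (pow_lt_one₀ hq0 hq1 j.val.succ_ne_zero)

section Lattice

/-- The points `b qⁿ`, `n ≥ 0`, on which the Jackson `q`-integral from `0` to `b` is supported. -/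
def qRay (q b : ℝ) : Set ℝ :=
  Set.range fun n : ℕ => b * q ^ n

variable {q zm zp : ℝ}

theorem hasSum_indicator_qRay_iff {E : Type*} [AddCommMonoid E] [TopologicalSpace E]
    (hq0 : 0 < q) (hq1 : q < 1) {b : ℝ} (hb : b ≠ 0) {f : ℝ → E} {s : E} :
    HasSum ((qRay q b).indicator f) s ↔ HasSum (fun n : ℕ => f (b * q ^ n)) s := by
  have hinj : Function.Injective fun n : ℕ => b * q ^ n :=
    (mul_right_injective₀ hb).comp (pow_right_strictAnti₀ hq0 hq1).injective
  rw [← hasSum_subtype_iff_indicator]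
  exact hinj.hasSum_range_iff

theorem mul_zpow_mem_qRay (hq : q ≠ 0) (z : ℝ) {m k : ℤ} (hmk : m ≤ k) :
    z * q ^ k ∈ qRay q (z * q ^ m) := by
  obtain ⟨n, rfl⟩ := Int.le.dest hmk
  exact ⟨n, by simp only [zpow_add₀ hq, zpow_natCast, mul_assoc]⟩

theorem mem_Lambda_iff_of_pos (hq : 0 < q) (hzm : zm < 0) {y : ℝ} (hy : 0 < y) :
    y ∈ Lambda q zm zp ↔ ∃ n : ℤ, y = zp * q ^ n := by
  refine ⟨?_, Or.inr⟩
  rintro (⟨m, rfl⟩ | h)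
  · exact absurd hy (mul_neg_of_neg_of_pos hzm (zpow_pos hq m)).not_gt
  · exact h

theorem mem_Lambda_iff_of_neg (hq : 0 < q) (hzp : 0 < zp) {y : ℝ} (hy : y < 0) :
    y ∈ Lambda q zm zp ↔ ∃ n : ℤ, y = zm * q ^ n := by
  refine ⟨?_, Or.inl⟩
  rintro (h | ⟨n, rfl⟩)
  · exact h
  · exact absurd hy (mul_pos hzp (zpow_pos hq n)).not_gt

theorem ne_zero_of_mem_Lambda (hq : q ≠ 0) (hzm : zm ≠ 0) (hzp : zp ≠ 0) {y : ℝ}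
    (hy : y ∈ Lambda q zm zp) : y ≠ 0 := by
  rcases hy with ⟨m, rfl⟩ | ⟨m, rfl⟩
  · exact mul_ne_zero hzm (zpow_ne_zero m hq)
  · exact mul_ne_zero hzp (zpow_ne_zero m hq)

theorem mul_pow_mem_Lambda (hq : q ≠ 0) {b : ℝ} (hb : b ∈ Lambda q zm zp) (n : ℕ) :
    b * q ^ n ∈ Lambda q zm zp := by
  rcases hb with ⟨m, rfl⟩ | ⟨m, rfl⟩
  · exact Or.inl ⟨m + n, by rw [zpow_add₀ hq, zpow_natCast, mul_assoc]⟩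
  · exact Or.inr ⟨m + n, by rw [zpow_add₀ hq, zpow_natCast, mul_assoc]⟩

theorem mem_qRay_iff (hq0 : 0 < q) (hq1 : q < 1) (hzm : zm < 0) (hzp : 0 < zp) {b y : ℝ}
    (hb : b ∈ Lambda q zm zp) :
    y ∈ qRay q b ↔ y ∈ Lambda q zm zp ∧ (0 < y ∧ y ≤ b ∨ b ≤ y ∧ y < 0) := by
  constructor
  · rintro ⟨n, rfl⟩
    have hpos : 0 < q ^ n := pow_pos hq0 n
    have hle : q ^ n ≤ 1 := pow_le_one₀ hq0.le hq1.le
    refine ⟨mul_pow_mem_Lambda hq0.ne' hb n, ?_⟩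
    rcases (ne_zero_of_mem_Lambda hq0.ne' hzm.ne hzp.ne' hb).lt_or_gt with h | h
    · exact Or.inr ⟨le_mul_of_le_one_right h.le hle, mul_neg_of_neg_of_pos h hpos⟩
    · exact Or.inl ⟨mul_pos h hpos, mul_le_of_le_one_right h.le hle⟩
  · rintro ⟨hy, ⟨hpos, hle⟩ | ⟨hle, hneg⟩⟩
    · obtain ⟨k, rfl⟩ := (mem_Lambda_iff_of_pos hq0 hzm hpos).1 hy
      obtain ⟨m, rfl⟩ := (mem_Lambda_iff_of_pos hq0 hzm (hpos.trans_le hle)).1 hb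
      exact mul_zpow_mem_qRay hq0.ne' zp
        ((zpow_le_zpow_iff_right_of_lt_one₀ hq0 hq1).1 (le_of_mul_le_mul_left hle hzp))
    · obtain ⟨k, rfl⟩ := (mem_Lambda_iff_of_neg hq0 hzp hneg).1 hy
      obtain ⟨m, rfl⟩ := (mem_Lambda_iff_of_neg hq0 hzp (hle.trans_lt hneg)).1 hb
      exact mul_zpow_mem_qRay hq0.ne' zm
        ((zpow_le_zpow_iff_right_of_lt_one₀ hq0 hq1).1 ((mul_le_mul_left_of_neg hzm).1 hle))

theorem indicator_qInterval_abs_mul (hq0 : 0 < q) (hq1 : q < 1) (hzm : zm < 0) (hzp : 0 < zp)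
    {a b : ℝ} (ha : a ∈ Lambda q zm zp) (hb : b ∈ Lambda q zm zp) (hab : a ≤ b) (g : ℝ → ℝ) :
    (qInterval q zm zp a b).indicator (fun y => |y| * g y) =
      (qRay q b).indicator (fun y => y * g y) - (qRay q a).indicator (fun y => y * g y) := by
  have ne_zero {y : ℝ} := ne_zero_of_mem_Lambda (y := y) hq0.ne' hzm.ne hzp.ne'
  ext y
  simp only [Pi.sub_apply, Set.indicator_apply, mem_qRay_iff hq0 hq1 hzm hzp ha,
    mem_qRay_iff hq0 hq1 hzm hzp hb, qInterval]
  by_cases hy : y ∈ Lambda q zm zp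
  · have := ne_zero ha
    have := ne_zero hb
    rcases (ne_zero hy).lt_or_gt with h | h <;> split_ifs <;> grind
  · split_ifs <;> simp_all

theorem hasSum_qInterval_abs_mul_pow (hq0 : 0 < q) (hq1 : q < 1) (hzm : zm < 0) (hzp : 0 < zp)
    {a b : ℝ} (ha : a ∈ Lambda q zm zp) (hb : b ∈ Lambda q zm zp) (hab : a ≤ b) (j : ℕ) :
    HasSum (fun y : qInterval q zm zp a b => |(y : ℝ)| * (y : ℝ) ^ j)
      ((b ^ (j + 1) - a ^ (j + 1)) / (1 - q ^ (j + 1))) := by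
  have geometric {c : ℝ} (hc : c ∈ Lambda q zm zp) :
      HasSum ((qRay q c).indicator fun y => y * y ^ j) (c ^ (j + 1) / (1 - q ^ (j + 1))) := by
    rw [hasSum_indicator_qRay_iff hq0 hq1 (ne_zero_of_mem_Lambda hq0.ne' hzm.ne hzp.ne' hc)]
    simp only [← pow_succ']
    simpa only [div_eq_mul_inv, mul_pow, pow_right_comm q] using
      (hasSum_geometric_of_lt_one (pow_nonneg hq0.le (j + 1))
        (pow_lt_one₀ hq0.le hq1 j.succ_ne_zero)).mul_left (c ^ (j + 1))
  refine (hasSum_subtype_iff_indicator (f := fun y : ℝ => |y| * y ^ j)).2 ?_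
  rw [sub_div, indicator_qInterval_abs_mul hq0 hq1 hzm hzp ha hb hab]
  exact (geometric hb).sub (geometric ha)

theorem qInterval_subset_Lambda (a b : ℝ) : qInterval q zm zp a b ⊆ Lambda q zm zp := by
  unfold qInterval
  split_ifs <;> exact Set.inter_subset_right

theorem lt_of_mem_consecutive_qInterval {a b c y z : ℝ} (hy : y ∈ qInterval q zm zp a b)
    (hz : z ∈ qInterval q zm zp b c) : y < z := by
  unfold qInterval at hy hz
  grind

end Lattice

section Dimension

variable {q zm zp : ℝ}

/-- The configurations interlacing with `X` are the points of the product of the intervals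
`I(xᵢ, xᵢ₊₁)`: such points are automatically strictly increasing. -/
def interlacesEquiv {N : ℕ} (X : Conf q zm zp (N + 1)) :
    {Y : Conf q zm zp N // Interlaces q zm zp Y X} ≃
      (∀ i : Fin N, qInterval q zm zp (X.1 i.castSucc) (X.1 i.succ)) where
  toFun Y i := ⟨Y.1.1 i, Y.2 i⟩
  invFun y :=
    ⟨⟨fun i => y i, by
      refine ⟨?_, fun i => qInterval_subset_Lambda _ _ (y i).2⟩
      cases N with
      | zero => exact Subsingleton.strictMono _
      | succ N =>
        exact Fin.strictMono_iff_lt_succ.2 fun i =>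
          lt_of_mem_consecutive_qInterval (y i.castSucc).2 (y i.succ).2⟩,
      fun i => (y i).2⟩

theorem hasSum_interlaces_prod_abs_mul_vprod (hq0 : 0 < q) (hq1 : q < 1) (hzm : zm < 0)
    (hzp : 0 < zp) {N : ℕ} (X : Conf q zm zp (N + 1)) :
    HasSum (fun Y : {Y : Conf q zm zp N // Interlaces q zm zp Y X} =>
      (∏ i, |Y.1.1 i|) * vprod Y.1.1) (vprod X.1 / qpochR q q N) := by
  have entries (i j : Fin N) := hasSum_qInterval_abs_mul_pow hq0 hq1 hzm hzp (X.2.2 i.castSucc)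
    (X.2.2 i.succ) (X.2.1 Fin.castSucc_lt_succ).le j
  have weighted_vandermonde (Y : Fin N → ℝ) :
      (∏ i, |Y i|) * vprod Y = (Matrix.of fun i j : Fin N => |Y i| * Y i ^ (j : ℕ)).det := by
    rw [vprod_eq_det_vandermonde, ← Matrix.det_mul_column]
    rfl
  have normalized_vandermonde : vprod X.1 / qpochR q q N =
      (Matrix.of fun i j : Fin N => (X.1 i.succ ^ ((j : ℕ) + 1) - X.1 i.castSucc ^ ((j : ℕ) + 1)) /
        (1 - q ^ ((j : ℕ) + 1))).det := by
    simp only [vprod_eq_det_vandermonde, det_vandermonde_eq_det_sub_pred, qpochR_self_eq_prod_fin,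
      div_eq_inv_mul, ← Finset.prod_inv_distrib, ← Matrix.det_mul_row, Matrix.of_apply]
  simp only [weighted_vandermonde, normalized_vandermonde]
  exact (interlacesEquiv X).hasSum_iff.2 (hasSum_det entries)

theorem tsum_interlaces_ofReal_vprod_div (hq0 : 0 < q) (hq1 : q < 1) (hzm : zm < 0) (hzp : 0 < zp)
    {N : ℕ} (X : Conf q zm zp (N + 1)) {c : ℝ} (hc : 0 ≤ c) :
    ∑' Y : {Y : Conf q zm zp N // Interlaces q zm zp Y X},
        (∏ i, ENNReal.ofReal |Y.1.1 i|) * ENNReal.ofReal (vprod Y.1.1 / c) =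
      ENNReal.ofReal (vprod X.1 / (c * qpochR q q N)) := by
  have hsum := (hasSum_interlaces_prod_abs_mul_vprod hq0 hq1 hzm hzp X).div_const c
  have abs_prod_nonneg (y : Fin N → ℝ) : 0 ≤ ∏ i, |y i| :=
    Finset.prod_nonneg fun _ _ => abs_nonneg _
  rw [mul_comm c, ← div_div, ← hsum.tsum_eq, ENNReal.ofReal_tsum_of_nonneg
    (fun Y => div_nonneg (mul_nonneg (abs_prod_nonneg _) (vprod_nonneg Y.1.2.1.monotone)) hc)
    hsum.summable]
  refine tsum_congr fun Y => ?_
  rw [← ENNReal.ofReal_prod_of_nonneg fun _ _ => abs_nonneg _,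
    ← ENNReal.ofReal_mul (abs_prod_nonneg _), mul_div_assoc]

end Dimension

/-- For every N ≥ 1 and X ∈ 𝔾_N, Dim X is finite and equals
∏_{i<j}(x_j − x_i) / ((q;q)₁ ⋯ (q;q)_{N−1}). -/
theorem dimension_formula (q zm zp : ℝ) (hq0 : 0 < q) (hq1 : q < 1) (hzm : zm < 0)
    (hzp : 0 < zp) (N : ℕ) (hN : 1 ≤ N) (X : Conf q zm zp N) :
    DimG q zm zp N X ≠ ⊤ ∧
    DimG q zm zp N X =
      ENNReal.ofReal (vprod X.1 / ∏ k ∈ Finset.range N, qpochR q q k) := by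
  obtain ⟨N, rfl⟩ := Nat.exists_eq_add_of_le' hN
  suffices formula : DimG q zm zp (N + 1) X =
      ENNReal.ofReal (vprod X.1 / ∏ k ∈ Finset.range (N + 1), qpochR q q k) from
    ⟨formula ▸ ENNReal.ofReal_ne_top, formula⟩
  induction N with
  | zero => simp [DimG, vprod_of_subsingleton, qpochR]
  | succ N ih =>
    have hc : 0 ≤ ∏ k ∈ Finset.range (N + 1), qpochR q q k :=
      Finset.prod_nonneg fun k _ => (qpochR_self_pos hq0.le hq1 k).le
    rw [Finset.prod_range_succ, ← tsum_interlaces_ofReal_vprod_div hq0 hq1 hzm hzp X hc, DimG]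
    exact tsum_congr fun Y => by rw [ih N.succ_pos Y.1]

end
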